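/- (Mehler's formula) For every w with 0 < w < 1 and all x, y ∈ ℝ, Σ_{n=0}^∞ [w^n (1 − w²)^{1/2} / (2^n n!)] H_n(x) H_n(y) = (1 − w²)^{1/2} · (1 − w²)^{−1/2} exp((2xyw − (x² + y²)w²)/(1 − w²)); that is, Σ_{n=0}^∞ [w^n (1 − w²)^{1/2} / (2^n n!)] H_n(x) H_n(y) = exp((2xyw − (x² + y²)w²)/(1 − w²)), the series converging absolutely. -/

import Mathlib

open Real

/-- The physicists' Hermite polynomial `H_n(x) = (−1)^n e^{x²} (dⁿ/dxⁿ) e^{−x²}`. -/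
noncomputable def hermiteH (n : ℕ) (x : ℝ) : ℝ :=
  (-1) ^ n * Real.exp (x ^ 2) * iteratedDeriv n (fun t => Real.exp (-t ^ 2)) x

open Complex MeasureTheory ProbabilityTheory
open scoped NNReal

/-!
If `X` and `Y` are independent Gaussian variables of mean `0` and variance `2`, then
`exp (-t ^ 2)` is the characteristic function of `X`, so differentiating `n` times under the
expectation gives `H_n(x) = exp (x ^ 2) * 𝔼[(-i X) ^ n * exp (i x X)]`. In the product
`H_n(x) H_n(y)` the powers combine to `(-X Y) ^ n`, and Mehler's series becomes an exponential
series under the expectation, with sum `exp (x ^ 2 + y ^ 2) * 𝔼[exp (-w X Y / 2 + i x X + i y Y)]`.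
The Gaussian density makes up for `exp |w X Y / 2|` exactly when `|w| < 1`; this justifies the
interchange, and the last expectation is computed by integrating out one variable at a time.
-/

lemma iteratedDeriv_clm_comp {𝕜 F G : Type*} [NontriviallyNormedField 𝕜]
    [NormedAddCommGroup F] [NormedSpace 𝕜 F] [NormedAddCommGroup G] [NormedSpace 𝕜 G]
    (L : F →L[𝕜] G) {f : 𝕜 → F} {n : ℕ} {x : 𝕜} (hf : ContDiffAt 𝕜 n f x) :
    iteratedDeriv n (fun t => L (f t)) x = L (iteratedDeriv n f x) :=
  DFunLike.congr_fun (L.iteratedFDeriv_comp_left hf le_rfl) fun _ => 1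

lemma cpow_ofReal_mul {r : ℝ} {z : ℂ} (hr : 0 < r) (hz : z ≠ 0) (c : ℂ) :
    ((r : ℂ) * z) ^ c = (r : ℂ) ^ c * z ^ c := by
  have hr' : (r : ℂ) ≠ 0 := ofReal_ne_zero.mpr hr.ne'
  rw [cpow_def_of_ne_zero (mul_ne_zero hr' hz), cpow_def_of_ne_zero hr', cpow_def_of_ne_zero hz,
    log_ofReal_mul hr hz, ofReal_log hr.le, ← Complex.exp_add, add_mul]

lemma ofReal_sqrt_eq_cpow {r : ℝ} (hr : 0 ≤ r) : ((√r : ℝ) : ℂ) = (r : ℂ) ^ (1 / 2 : ℂ) := by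
  rw [Real.sqrt_eq_rpow, ofReal_cpow hr]
  norm_num

lemma hasSum_integral_pow_div_factorial_mul {α : Type*} [MeasurableSpace α] {μ : Measure α}
    {f g : α → ℂ} (hf : AEStronglyMeasurable f μ) (hg : AEStronglyMeasurable g μ)
    (hfg : Integrable (fun a => Real.exp ‖f a‖ * ‖g a‖) μ) :
    HasSum (fun n : ℕ => ∫ a, f a ^ n / n.factorial * g a ∂μ) (∫ a, cexp (f a) * g a ∂μ) := by
  have hasSum_norm (a : α) : HasSum (fun n : ℕ => ‖f a‖ ^ n / n.factorial * ‖g a‖)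
      (Real.exp ‖f a‖ * ‖g a‖) := by
    rw [Real.exp_eq_exp_ℝ]
    exact (NormedSpace.expSeries_div_hasSum_exp ‖f a‖).mul_right _
  have hasSum_exp (a : α) : HasSum (fun n : ℕ => f a ^ n / n.factorial * g a)
      (cexp (f a) * g a) := by
    rw [Complex.exp_eq_exp_ℂ]
    exact (NormedSpace.expSeries_div_hasSum_exp (f a)).mul_right _
  refine hasSum_integral_of_dominated_convergence
    (fun (n : ℕ) a => ‖f a‖ ^ n / n.factorial * ‖g a‖)
    (fun n => ((hf.pow n).mul_const _).mul hg)
    (fun n => ae_of_all _ fun a => by simp)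
    (ae_of_all _ fun a => (hasSum_norm a).summable) ?_ (ae_of_all _ hasSum_exp)
  simpa only [(hasSum_norm _).tsum_eq] using hfg

section Gaussian

variable {v : ℝ≥0} {b t : ℂ}

lemma integral_cexp_quadratic_gaussianReal_eq_integral_volume (hv : v ≠ 0) (b c : ℂ) :
    ∫ z : ℝ, cexp (b * z ^ 2 + c * z) ∂gaussianReal 0 v =
      (√(2 * π * v) : ℂ)⁻¹ * ∫ z : ℝ, cexp ((b - (2 * v : ℂ)⁻¹) * z ^ 2 + c * z) := by
  simp only [integral_gaussianReal_eq_integral_smul hv, gaussianPDFReal, real_smul]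
  push_cast
  simp_rw [mul_assoc, integral_const_mul, ← Complex.exp_add]
  congr with z
  congr 1
  ring

lemma integral_cexp_quadratic_gaussianReal (hb : 2 * v * b.re < 1) (c : ℂ) :
    ∫ z : ℝ, cexp (b * z ^ 2 + c * z) ∂gaussianReal 0 v =
      (1 - 2 * v * b) ^ (-1 / 2 : ℂ) * cexp (v * c ^ 2 / (2 * (1 - 2 * v * b))) := by
  rcases eq_or_ne v 0 with rfl | hv
  · simp
  have hvC : (v : ℂ) ≠ 0 := by exact_mod_cast hv
  set s : ℂ := 1 - 2 * v * b with hs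
  have hs_re : 0 < s.re := by simpa [hs] using hb
  have hs0 : s ≠ 0 := fun h => by simp [h] at hs_re
  have hs_arg : s.arg ≠ π := fun h => hs_re.not_gt (arg_eq_pi_iff.mp h).1
  have hcoeff : b - (2 * v : ℂ)⁻¹ = (-(2 * v : ℝ)⁻¹ : ℝ) * s := by
    rw [hs]
    push_cast
    field_simp
    ring
  have hcoeff_re : (b - (2 * v : ℂ)⁻¹).re < 0 := by
    rw [hcoeff, re_ofReal_mul]
    exact mul_neg_of_neg_of_pos (neg_neg_of_pos (by positivity)) hs_re
  have hbase : (π : ℂ) / -(b - (2 * v : ℂ)⁻¹) = (2 * π * v : ℝ) * s⁻¹ := by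
    rw [hcoeff]
    push_cast
    field_simp
  have hexponent : 0 - c ^ 2 / (4 * (b - (2 * v : ℂ)⁻¹)) = v * c ^ 2 / (2 * s) := by
    rw [hcoeff]
    push_cast
    field_simp
    ring
  have hsqrt : (√(2 * π * v) : ℂ) ≠ 0 := ofReal_ne_zero.mpr (by positivity)
  have hvolume := integral_cexp_quadratic hcoeff_re c 0
  simp only [add_zero] at hvolume
  rw [integral_cexp_quadratic_gaussianReal_eq_integral_volume hv, hvolume, hbase, hexponent,
    cpow_ofReal_mul (by positivity) (inv_ne_zero hs0), ← ofReal_sqrt_eq_cpow (by positivity),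
    mul_assoc (√(2 * π * v) : ℂ), inv_mul_cancel_left₀ hsqrt, inv_cpow _ _ hs_arg,
    ← cpow_neg, neg_div]

lemma integrable_cexp_quadratic_gaussianReal (hb : 2 * v * b.re < 1) (c : ℂ) :
    Integrable (fun z : ℝ => cexp (b * z ^ 2 + c * z)) (gaussianReal 0 v) := by
  have hre : 0 < (1 - 2 * v * b).re := by simpa using hb
  have hs : 1 - 2 * v * b ≠ 0 := fun h => by simp [h] at hre
  apply Integrable.of_integral_ne_zero
  rw [integral_cexp_quadratic_gaussianReal hb]
  exact mul_ne_zero ((cpow_ne_zero_iff_of_exponent_ne_zero (by norm_num)).mpr hs)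
    (Complex.exp_ne_zero _)

lemma integrable_exp_norm_mul_norm_cexp_gaussianReal_prod (ht : v * ‖t‖ < 1) (a b : ℂ) :
    Integrable (fun p : ℝ × ℝ => Real.exp ‖t * p.1 * p.2‖ * ‖cexp (a * p.1 + b * p.2)‖)
      ((gaussianReal 0 v).prod (gaussianReal 0 v)) := by
  have hdom (c : ℂ) : Integrable (fun z : ℝ => cexp ((‖t‖ / 2 : ℝ) * z ^ 2 + c * z))
      (gaussianReal 0 v) :=
    integrable_cexp_quadratic_gaussianReal (by rw [ofReal_re]; linarith) c
  refine ((hdom a).mul_prod (hdom b)).mono (by fun_prop) (ae_of_all _ fun p => ?_)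
  have hyoung : ‖t * p.1 * p.2‖ ≤ ‖t‖ / 2 * p.1 ^ 2 + ‖t‖ / 2 * p.2 ^ 2 := by
    simp only [norm_mul, norm_real, Real.norm_eq_abs, ← sq_abs p.1, ← sq_abs p.2]
    nlinarith [mul_nonneg (norm_nonneg t) (sq_nonneg (|p.1| - |p.2|))]
  rw [Real.norm_of_nonneg (by positivity), ← Complex.exp_add, Complex.norm_exp, Complex.norm_exp,
    ← Real.exp_add, Real.exp_le_exp]
  simp only [add_re, ← ofReal_pow, re_ofReal_mul, ofReal_re]
  linarith

lemma integrable_cexp_mul_add_gaussianReal_prod (ht : v * ‖t‖ < 1) (a b : ℂ) :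
    Integrable (fun p : ℝ × ℝ => cexp (t * p.1 * p.2) * cexp (a * p.1 + b * p.2))
      ((gaussianReal 0 v).prod (gaussianReal 0 v)) := by
  refine (integrable_exp_norm_mul_norm_cexp_gaussianReal_prod ht a b).mono' (by fun_prop)
    (ae_of_all _ fun p => ?_)
  rw [norm_mul]
  gcongr
  exact norm_exp_le_exp_norm _

lemma integral_cexp_mul_add_gaussianReal (v : ℝ≥0) (t a b z : ℂ) :
    ∫ u : ℝ, cexp (t * z * u) * cexp (a * z + b * u) ∂gaussianReal 0 v =
      cexp (v * b ^ 2 / 2) * cexp (v * t ^ 2 / 2 * z ^ 2 + (a + v * t * b) * z) := by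
  have hmgf := complexMGF_id_gaussianReal (μ := 0) (v := v) (t * z + b)
  simp only [complexMGF, id, ofReal_zero, mul_zero, zero_add] at hmgf
  calc ∫ u : ℝ, cexp (t * z * u) * cexp (a * z + b * u) ∂gaussianReal 0 v
      = cexp (a * z) * ∫ u : ℝ, cexp ((t * z + b) * u) ∂gaussianReal 0 v := by
        rw [← integral_const_mul]
        congr with u
        simp only [← Complex.exp_add]
        ring_nf
    _ = cexp (v * b ^ 2 / 2) * cexp (v * t ^ 2 / 2 * z ^ 2 + (a + v * t * b) * z) := by
        rw [hmgf, ← Complex.exp_add, ← Complex.exp_add]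
        ring_nf

lemma integral_cexp_mul_add_gaussianReal_prod (ht : v * ‖t‖ < 1) (a b : ℂ) :
    ∫ p : ℝ × ℝ, cexp (t * p.1 * p.2) * cexp (a * p.1 + b * p.2)
        ∂(gaussianReal 0 v).prod (gaussianReal 0 v) =
      (1 - (v * t) ^ 2) ^ (-1 / 2 : ℂ) *
        cexp (v * (a ^ 2 + b ^ 2 + 2 * v * t * a * b) / (2 * (1 - (v * t) ^ 2))) := by
  have hvt : ‖(v * t : ℂ) ^ 2‖ < 1 := by
    rw [norm_pow, norm_mul, norm_real, NNReal.norm_eq]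
    exact pow_lt_one₀ (by positivity) ht two_ne_zero
  have hre : 2 * v * (v * t ^ 2 / 2 : ℂ).re < 1 := by
    calc 2 * v * (v * t ^ 2 / 2 : ℂ).re = ((v * t : ℂ) ^ 2).re := by
          rw [← re_ofReal_mul]
          congr 1
          push_cast
          ring
      _ < 1 := (re_le_norm _).trans_lt hvt
  have hne : 1 - (v * t : ℂ) ^ 2 ≠ 0 := (isUnit_one_sub_of_norm_lt_one hvt).ne_zero
  rw [integral_prod _ (integrable_cexp_mul_add_gaussianReal_prod ht a b)]
  simp only [integral_cexp_mul_add_gaussianReal]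
  rw [integral_const_mul, integral_cexp_quadratic_gaussianReal hre,
    show 1 - 2 * (v : ℂ) * (v * t ^ 2 / 2) = 1 - (v * t) ^ 2 by ring, mul_left_comm,
    ← Complex.exp_add]
  congr 2
  simp only [mul_pow] at hne ⊢
  field_simp
  ring

end Gaussian

lemma hermiteH_eq_integral_gaussianReal (n : ℕ) (x : ℝ) :
    (hermiteH n x : ℂ) =
      cexp (x ^ 2) * ∫ z : ℝ, (-I * z) ^ n * cexp (I * x * z) ∂gaussianReal 0 2 := by
  have hcharFun : charFun (gaussianReal 0 2) = fun t : ℝ => ofRealCLM (Real.exp (-t ^ 2)) := by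
    ext t
    rw [charFun_gaussianReal, ofRealCLM_apply]
    push_cast
    ring_nf
  have hderiv : ((iteratedDeriv n (fun t => Real.exp (-t ^ 2)) x : ℝ) : ℂ) =
      I ^ n * ∫ z : ℝ, z ^ n * cexp (x * z * I) ∂gaussianReal 0 2 := by
    rw [← iteratedDeriv_charFun (memLp_id_gaussianReal n), hcharFun]
    exact (iteratedDeriv_clm_comp ofRealCLM (by fun_prop)).symm
  rw [hermiteH]
  push_cast
  rw [hderiv, mul_comm ((-1) ^ n), mul_assoc, ← mul_assoc ((-1) ^ n), ← mul_pow,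
    ← integral_const_mul, neg_one_mul]
  congr with z
  ring_nf

lemma hermiteH_mul_hermiteH_eq_integral_gaussianReal_prod (n : ℕ) (x y : ℝ) :
    (hermiteH n x * hermiteH n y : ℂ) =
      cexp (x ^ 2 + y ^ 2) * ∫ p : ℝ × ℝ, (-(p.1 * p.2 : ℂ)) ^ n *
        cexp (I * x * p.1 + I * y * p.2) ∂(gaussianReal 0 2).prod (gaussianReal 0 2) := by
  rw [hermiteH_eq_integral_gaussianReal, hermiteH_eq_integral_gaussianReal, mul_mul_mul_comm,
    ← Complex.exp_add, ← integral_prod_mul]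
  congr with p
  have hpow : (-I * p.1) ^ n * (-I * p.2) ^ n = (-(p.1 * p.2 : ℂ)) ^ n := by
    rw [← mul_pow, mul_mul_mul_comm, neg_mul_neg, I_mul_I, neg_one_mul]
  rw [mul_mul_mul_comm, hpow, ← Complex.exp_add]

theorem hasSum_hermiteH_mul_hermiteH {w : ℂ} (hw : ‖w‖ < 1) (x y : ℝ) :
    HasSum (fun n : ℕ => w ^ n / (2 ^ n * n.factorial) * (hermiteH n x * hermiteH n y))
      ((1 - w ^ 2) ^ (-1 / 2 : ℂ) *
        cexp ((2 * x * y * w - (x ^ 2 + y ^ 2) * w ^ 2) / (1 - w ^ 2))) := by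
  have ht : (2 : ℝ≥0) * ‖-w / 2‖ < 1 := by simpa [mul_div_cancel₀] using hw
  have hsum := (hasSum_integral_pow_div_factorial_mul (by fun_prop) (by fun_prop)
    (integrable_exp_norm_mul_norm_cexp_gaussianReal_prod ht (I * x) (I * y))).mul_left
      (cexp (x ^ 2 + y ^ 2))
  convert! hsum using 1
  · ext n
    rw [hermiteH_mul_hermiteH_eq_integral_gaussianReal_prod, mul_left_comm, ← integral_const_mul]
    congr with p
    rw [show -w / 2 * p.1 * p.2 = w / 2 * -(p.1 * p.2 : ℂ) by ring, mul_pow, div_pow]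
    field_simp
  · have hw_sq : ‖w ^ 2‖ < 1 := by
      rw [norm_pow]
      exact pow_lt_one₀ (norm_nonneg w) hw two_ne_zero
    have hne : 1 - w ^ 2 ≠ 0 := (isUnit_one_sub_of_norm_lt_one hw_sq).ne_zero
    have hvt : ((2 : ℝ≥0) : ℂ) * (-w / 2) = -w := by
      push_cast
      ring
    rw [integral_cexp_mul_add_gaussianReal_prod ht, hvt, neg_sq, mul_left_comm, ← Complex.exp_add]
    congr 2
    push_cast
    simp only [mul_pow, I_sq]
    field_simp
    linear_combination 2 * w * x * y * I_sq

theorem mehler_formula_general (w : ℝ) (hw : |w| < 1) (x y : ℝ) :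
    (Summable fun n : ℕ =>
        |w ^ n * Real.sqrt (1 - w ^ 2) / (2 ^ n * n.factorial) *
          (hermiteH n x * hermiteH n y)|) ∧
    (∑' n : ℕ,
        w ^ n * Real.sqrt (1 - w ^ 2) / (2 ^ n * n.factorial) *
          (hermiteH n x * hermiteH n y))
      = Real.exp ((2 * x * y * w - (x ^ 2 + y ^ 2) * w ^ 2) / (1 - w ^ 2)) := by
  have hpos : 0 < 1 - w ^ 2 := sub_pos.mpr ((sq_lt_one_iff_abs_lt_one w).mpr hw)
  have hsqrt : (√(1 - w ^ 2) : ℂ) * (1 - (w : ℂ) ^ 2) ^ (-1 / 2 : ℂ) = 1 := by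
    have hne : (1 - w ^ 2 : ℂ) ≠ 0 := by exact_mod_cast hpos.ne'
    rw [ofReal_sqrt_eq_cpow hpos.le]
    push_cast
    rw [← cpow_add _ _ hne]
    norm_num
  suffices h : HasSum (fun n : ℕ => w ^ n * √(1 - w ^ 2) / (2 ^ n * n.factorial) *
      (hermiteH n x * hermiteH n y))
      (Real.exp ((2 * x * y * w - (x ^ 2 + y ^ 2) * w ^ 2) / (1 - w ^ 2))) from
    ⟨h.summable.abs, h.tsum_eq⟩
  rw [← hasSum_ofReal]
  convert! (hasSum_hermiteH_mul_hermiteH (w := w) (by simpa using hw) x y).mul_left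
    (√(1 - w ^ 2) : ℂ) using 1
  · ext n
    push_cast
    ring
  · rw [← mul_assoc, hsqrt, one_mul]
    push_cast
    rfl

/-- Mehler's formula: for `0 < w < 1` and all real `x, y`,
`Σ_{n≥0} [wⁿ (1−w²)^{1/2} / (2ⁿ n!)] H_n(x) H_n(y)
  = exp((2xyw − (x²+y²)w²)/(1−w²))`, the series converging absolutely. -/
theorem mehler_formula (w : ℝ) (hw0 : 0 < w) (hw1 : w < 1) (x y : ℝ) :
    (Summable fun n : ℕ =>
        |w ^ n * Real.sqrt (1 - w ^ 2) / (2 ^ n * n.factorial) *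
          (hermiteH n x * hermiteH n y)|) ∧
    (∑' n : ℕ,
        w ^ n * Real.sqrt (1 - w ^ 2) / (2 ^ n * n.factorial) *
          (hermiteH n x * hermiteH n y))
      = Real.exp ((2 * x * y * w - (x ^ 2 + y ^ 2) * w ^ 2) / (1 - w ^ 2)) := by
  exact mehler_formula_general w (by rwa [abs_of_pos hw0]) x y
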